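/- Let k ≥ 2 be a fixed integer. For all real D₁, D₂, N₁, N₂ ≥ 1 and all δ > 0, the number A(D₁,D₂,N₁,N₂;δ) of quadruples (d₁,d₂,n₁,n₂) of positive integers with D₁ < d₁ ≤ 2D₁, D₂ < d₂ ≤ 2D₂, N₁ < n₁ ≤ 2N₁, N₂ < n₂ ≤ 2N₂ and |√(n₁/d₁^k) − √(n₂/d₂^k)| ≤ δ satisfies A(D₁,D₂,N₁,N₂;δ) ≪ δ (D₁D₂)^{1+k/4}(N₁N₂)^{3/4} + (D₁D₂N₁N₂)^{1/2} log(2 D₁D₂N₁N₂), where the implied constant depends only on k. -/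

import Mathlib

open Real Filter

noncomputable section

lemma sc_box (A B : ℝ) (hA : 0 ≤ A) (hB : 0 ≤ B) (e : ℕ) (he : 0 < e) (T : Finset (ℕ × ℕ))
    (hT : ∀ p ∈ T, 0 < p.1 ∧ 0 < p.2 ∧ (p.1 : ℝ) ≤ 2 * A ∧ (p.2 : ℝ) ≤ 2 * B ∧
      Nat.gcd p.1 p.2 = e) : (T.card : ℝ) ≤ 4 * (A * B / (e : ℝ) ^ 2) := by
  have he' : (0 : ℝ) < e := by exact_mod_cast he
  have h1 : T.card ≤ (Finset.Icc 1 ⌊2 * A / e⌋₊ ×ˢ Finset.Icc 1 ⌊2 * B / e⌋₊).card := by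
    apply Finset.card_le_card_of_injOn (fun p => (p.1 / e, p.2 / e))
    · intro p hp
      obtain ⟨h1, h2, h3, h4, h5⟩ := hT p hp
      have d1 : e ∣ p.1 := h5 ▸ Nat.gcd_dvd_left _ _
      have d2 : e ∣ p.2 := h5 ▸ Nat.gcd_dvd_right _ _
      have key : ∀ x : ℕ, ∀ X : ℝ, 0 < x → (x : ℝ) ≤ 2 * X → e ∣ x →
          1 ≤ x / e ∧ x / e ≤ ⌊2 * X / e⌋₊ := by
        intro x X hx hX hd
        refine ⟨Nat.div_pos (Nat.le_of_dvd hx hd) he, ?_⟩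
        apply Nat.le_floor
        rw [Nat.cast_div hd he'.ne']
        gcongr
      simp only [Finset.coe_product, Finset.coe_Icc, Set.mem_prod, Set.mem_Icc]
      exact ⟨key _ _ h1 h3 d1, key _ _ h2 h4 d2⟩
    · intro p hp q hq hpq
      obtain ⟨-, -, -, -, h5⟩ := hT p hp
      obtain ⟨-, -, -, -, h6⟩ := hT q hq
      simp only [Prod.mk.injEq] at hpq
      have d1 : e ∣ p.1 := h5 ▸ Nat.gcd_dvd_left _ _
      have d2 : e ∣ p.2 := h5 ▸ Nat.gcd_dvd_right _ _
      have d3 : e ∣ q.1 := h6 ▸ Nat.gcd_dvd_left _ _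
      have d4 : e ∣ q.2 := h6 ▸ Nat.gcd_dvd_right _ _
      ext
      · rw [← Nat.div_mul_cancel d1, ← Nat.div_mul_cancel d3, hpq.1]
      · rw [← Nat.div_mul_cancel d2, ← Nat.div_mul_cancel d4, hpq.2]
  rw [Finset.card_product, Nat.card_Icc, Nat.card_Icc] at h1
  simp only [Nat.add_sub_cancel] at h1
  calc (T.card : ℝ) ≤ (⌊2 * A / e⌋₊ * ⌊2 * B / e⌋₊ : ℕ) := by exact_mod_cast h1
    _ = (⌊2 * A / e⌋₊ : ℝ) * ⌊2 * B / e⌋₊ := by push_cast; rfl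
    _ ≤ (2 * A / e) * (2 * B / e) := by
        gcongr <;> exact Nat.floor_le (by positivity)
    _ = _ := by field_simp; ring

lemma sc_sep (T : Finset ℝ) (s L : ℝ) (hs : 0 < s) (hL : 0 ≤ L)
    (h1 : ∀ x ∈ T, ∀ y ∈ T, x ≠ y → s ≤ |x - y|) (h2 : ∀ x ∈ T, ∀ y ∈ T, |x - y| ≤ L) :
    (T.card : ℝ) ≤ 1 + L / s := by
  rcases T.eq_empty_or_nonempty with rfl | hne
  · simp; positivity
  set m := T.min' hne
  have hm : ∀ x ∈ T, 0 ≤ (x - m) / s := fun x hx =>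
    div_nonneg (sub_nonneg.2 (T.min'_le x hx)) hs.le
  have h : T.card ≤ (Finset.range (⌊L / s⌋₊ + 1)).card := by
    apply Finset.card_le_card_of_injOn (fun x => ⌊(x - m) / s⌋₊)
    · intro x hx
      simp only [Finset.coe_range, Set.mem_Iio, Nat.lt_succ_iff]
      apply Nat.floor_le_floor
      gcongr
      exact (le_abs_self _).trans (h2 x hx m (T.min'_mem hne))
    · intro x hx y hy hxy
      by_contra hn
      have h3 := h1 x hx y hy hn
      simp only at hxy
      have a1 := Nat.floor_le (hm x hx)
      have a2 := Nat.lt_floor_add_one ((x - m) / s)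
      have b1 := Nat.floor_le (hm y hy)
      have b2 := Nat.lt_floor_add_one ((y - m) / s)
      rw [hxy] at a1 a2
      have : |(x - m) / s - (y - m) / s| < 1 := by rw [abs_lt]; constructor <;> linarith
      rw [← sub_div, abs_div, abs_of_pos hs, div_lt_one hs] at this
      rw [show x - m - (y - m) = x - y by ring] at this
      linarith
  rw [Finset.card_range] at h
  have h' : (T.card : ℝ) ≤ ⌊L / s⌋₊ + 1 := by exact_mod_cast h
  have := Nat.floor_le (a := L / s) (by positivity)
  linarith

lemma sc_spaced (A B η : ℝ) (hA : 0 < A) (hB : 0 < B) (hη : 0 ≤ η) (e : ℕ) (he : 0 < e)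
    (T : Finset (ℕ × ℕ))
    (hT : ∀ p ∈ T, 0 < p.1 ∧ 0 < p.2 ∧ (p.1 : ℝ) ≤ 2 * A ∧ (p.2 : ℝ) ≤ 2 * B ∧
      Nat.gcd p.1 p.2 = e)
    (hp : ∀ p ∈ T, ∀ q ∈ T, |(p.1 : ℝ) / p.2 - (q.1 : ℝ) / q.2| ≤ η * (A / B)) :
    (T.card : ℝ) ≤ 1 + 4 * η * (A * B / (e : ℝ) ^ 2) := by
  classical
  have he' : (0 : ℝ) < e := by exact_mod_cast he
  have sep : ∀ p ∈ T, ∀ q ∈ T, p ≠ q →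
      (e : ℝ) ^ 2 / (4 * B ^ 2) ≤ |(p.1 : ℝ) / p.2 - (q.1 : ℝ) / q.2| := by
    rintro ⟨a, b⟩ hp ⟨c, d⟩ hq hpq
    obtain ⟨h1, h2, h3, h4, h5⟩ := hT _ hp
    obtain ⟨g1, g2, g3, g4, g5⟩ := hT _ hq
    simp only at *
    obtain ⟨a', ha⟩ : e ∣ a := h5 ▸ Nat.gcd_dvd_left _ _
    obtain ⟨b', hb⟩ : e ∣ b := h5 ▸ Nat.gcd_dvd_right _ _
    obtain ⟨c', hc⟩ : e ∣ c := g5 ▸ Nat.gcd_dvd_left _ _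
    obtain ⟨d', hd⟩ : e ∣ d := g5 ▸ Nat.gcd_dvd_right _ _
    have k1 : Nat.gcd a' b' = 1 := by
      rw [ha, hb, Nat.gcd_mul_left] at h5
      exact Nat.eq_of_mul_eq_mul_left he (by linarith)
    have k2 : Nat.gcd c' d' = 1 := by
      rw [hc, hd, Nat.gcd_mul_left] at g5
      exact Nat.eq_of_mul_eq_mul_left he (by linarith)
    have hne : a' * d' ≠ c' * b' := by
      intro h
      apply hpq
      have e1 : a' = c' := by
        apply Nat.dvd_antisymm
        · exact (Nat.Coprime.dvd_mul_right k1).1 (Dvd.intro _ h)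
        · exact (Nat.Coprime.dvd_mul_right k2).1 (Dvd.intro _ h.symm)
      have hc0 : 0 < c' := Nat.pos_of_ne_zero (by rintro rfl; simp at hc; omega)
      have e2 : d' = b' := by
        rw [e1] at h
        exact Nat.eq_of_mul_eq_mul_left hc0 h
      rw [ha, hb, hc, hd, e1, e2]
    have hz : (1 : ℝ) ≤ |(a' : ℝ) * d' - c' * b'| := by
      have : (1 : ℤ) ≤ |(a' : ℤ) * d' - c' * b'| := by
        apply Int.one_le_abs
        intro h
        apply hne
        have : (a' : ℤ) * d' = c' * b' := by linarith
        exact_mod_cast this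
      exact_mod_cast this
    have hb0 : (0 : ℝ) < b := by exact_mod_cast h2
    have hd0 : (0 : ℝ) < d := by exact_mod_cast g2
    have : (a : ℝ) / b - c / d = e ^ 2 * (a' * d' - c' * b') / (b * d) := by
      rw [div_sub_div _ _ hb0.ne' hd0.ne']
      congr 1
      rw [ha, hb, hc, hd]; push_cast; ring
    rw [this, abs_div, abs_mul, abs_of_pos (show (0 : ℝ) < e ^ 2 by positivity),
      abs_of_pos (show (0 : ℝ) < b * d by positivity)]
    have : (b : ℝ) * d ≤ 4 * B ^ 2 := by
      calc (b : ℝ) * d ≤ (2 * B) * (2 * B) := by gcongr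
        _ = _ := by ring
    gcongr
    nlinarith [show (0 : ℝ) < e ^ 2 by positivity]
  have spos : (0 : ℝ) < (e : ℝ) ^ 2 / (4 * B ^ 2) := by positivity
  have hinj : Set.InjOn (fun p : ℕ × ℕ => (p.1 : ℝ) / p.2) T := by
    intro p hp q hq hpq
    by_contra hn
    have := sep p hp q hq hn
    simp only at hpq
    rw [hpq] at this
    simp at this
    linarith
  have := sc_sep (T.image (fun p : ℕ × ℕ => (p.1 : ℝ) / p.2)) _ (η * (A / B)) spos
    (by positivity) ?_ ?_
  · rw [Finset.card_image_of_injOn hinj] at this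
    refine this.trans (le_of_eq ?_)
    field_simp
  · intro x hx y hy hxy
    obtain ⟨p, hp, rfl⟩ := Finset.mem_image.1 hx
    obtain ⟨q, hq, rfl⟩ := Finset.mem_image.1 hy
    apply sep p hp q hq
    rintro rfl
    exact hxy rfl
  · intro x hx y hy
    obtain ⟨p, hp', rfl⟩ := Finset.mem_image.1 hx
    obtain ⟨q, hq, rfl⟩ := Finset.mem_image.1 hy
    exact hp p hp' q hq

lemma sc_summin (t : ℝ) (ht : 0 < t) (F : ℕ) :
    ∑ f ∈ Finset.Icc 1 F, min 1 (t ^ 2 / (f : ℝ) ^ 2) ≤ 4 * t * (F / (t + F)) := by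
  induction F with
  | zero => simp
  | succ n ih =>
    rw [Finset.sum_Icc_succ_top (by omega)]
    have hn : (0 : ℝ) ≤ n := Nat.cast_nonneg n
    have : min 1 (t ^ 2 / ((n + 1 : ℕ) : ℝ) ^ 2) ≤
        4 * t * (((n + 1 : ℕ) : ℝ) / (t + (n + 1 : ℕ))) - 4 * t * (n / (t + n)) := by
      have e : 4 * t * (((n + 1 : ℕ) : ℝ) / (t + (n + 1 : ℕ))) - 4 * t * (n / (t + n))
          = 4 * t ^ 2 / ((t + n + 1) * (t + n)) := by
        push_cast
        field_simp
        ring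
      rw [e]
      push_cast
      rcases le_total ((n : ℝ) + 1) t with h | h
      · refine (min_le_left _ _).trans ?_
        rw [le_div_iff₀ (by positivity)]
        nlinarith
      · refine (min_le_right _ _).trans ?_
        rw [div_le_div_iff₀ (by positivity) (by positivity)]
        have : (t + n + 1) * (t + n) ≤ 4 * (n + 1) ^ 2 := by nlinarith
        nlinarith [sq_nonneg t]
    linarith

lemma sc_summin' (P Q : ℝ) (hP : 0 < P) (hQ : 0 < Q) (F : ℕ) :
    ∑ f ∈ Finset.Icc 1 F, min P (Q / (f : ℝ) ^ 2) ≤ 4 * √(P * Q) := by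
  have h := sc_summin (√(Q / P)) (by positivity) F
  have e1 : ∀ f : ℕ, min P (Q / (f : ℝ) ^ 2) = P * min 1 (√(Q / P) ^ 2 / (f : ℝ) ^ 2) := by
    intro f
    rw [Real.sq_sqrt (by positivity), mul_min_of_nonneg _ _ hP.le]
    congr 1
    · ring
    · field_simp
  simp_rw [e1]
  rw [← Finset.mul_sum]
  have h2 : (F : ℝ) / (√(Q / P) + F) ≤ 1 := by
    apply div_le_one_of_le₀
    · linarith [Real.sqrt_nonneg (Q / P)]
    · positivity
  have e2 : P * √(Q / P) = √(P * Q) := by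
    rw [show P * Q = P ^ 2 * (Q / P) by field_simp, Real.sqrt_mul (by positivity),
      Real.sqrt_sq hP.le]
  calc _ ≤ P * (4 * √(Q / P) * (F / (√(Q / P) + F))) := by gcongr
    _ ≤ P * (4 * √(Q / P) * 1) := by gcongr
    _ = _ := by rw [← e2]; ring

lemma sc_invsq (E : ℕ) : ∑ e ∈ Finset.Icc 1 E, 1 / (e : ℝ) ^ 2 ≤ 4 := by
  have := sc_summin' 1 1 one_pos one_pos E
  simp only [mul_one, Real.sqrt_one] at this
  refine le_trans (le_of_eq ?_) this
  apply Finset.sum_congr rfl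
  intro e he
  have h : (1 : ℝ) ≤ e := by exact_mod_cast (Finset.mem_Icc.1 he).1
  rw [min_eq_right]
  apply div_le_one_of_le₀ _ (by positivity)
  nlinarith

/-- the core counting lemma -/
lemma sc_core (A B M N η : ℝ) (hA : 1 ≤ A) (hB : 1 ≤ B) (hM : 1 ≤ M) (hN : 1 ≤ N) (hη : 0 ≤ η)
    (S : Finset ((ℕ × ℕ) × (ℕ × ℕ)))
    (hS1 : ∀ q ∈ S, 0 < q.1.1 ∧ 0 < q.1.2 ∧ (q.1.1 : ℝ) ≤ 2 * A ∧ (q.1.2 : ℝ) ≤ 2 * B)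
    (hS2 : ∀ q ∈ S, 0 < q.2.1 ∧ 0 < q.2.2 ∧ (q.2.1 : ℝ) ≤ 2 * M ∧ (q.2.2 : ℝ) ≤ 2 * N)
    (h1 : ∀ q ∈ S, ∀ r ∈ S, q.1 = r.1 →
      |(q.2.1 : ℝ) / q.2.2 - (r.2.1 : ℝ) / r.2.2| ≤ η * (M / N))
    (h2 : ∀ q ∈ S, ∀ r ∈ S, q.2 = r.2 →
      |(q.1.1 : ℝ) / q.1.2 - (r.1.1 : ℝ) / r.1.2| ≤ η * (A / B)) :
    (S.card : ℝ) ≤ 16 * √(A * B * (M * N)) * (1 + Real.log (2 * √(A * B))) +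
      256 * η * (A * B * (M * N)) := by
  classical
  set X := A * B with hX
  set Y := M * N with hY
  have hX1 : 1 ≤ X := one_le_mul_of_one_le_of_one_le hA hB
  have hY1 : 1 ≤ Y := one_le_mul_of_one_le_of_one_le hM hN
  have hX0 : 0 < X := by linarith
  have hY0 : 0 < Y := by linarith
  set E := ⌊2 * √X⌋₊
  set F := ⌊2 * √Y⌋₊
  have gcdb : ∀ a b : ℕ, ∀ A B : ℝ, 1 ≤ A → 1 ≤ B → 0 < a → 0 < b → (a : ℝ) ≤ 2 * A →
      (b : ℝ) ≤ 2 * B → Nat.gcd a b ∈ Finset.Icc 1 ⌊2 * √(A * B)⌋₊ := by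
    intro a b A B hA hB ha hb h1 h2
    rw [Finset.mem_Icc]
    refine ⟨Nat.gcd_pos_of_pos_left _ ha, Nat.le_floor ?_⟩
    have g1 : (Nat.gcd a b : ℝ) ≤ a := by exact_mod_cast Nat.gcd_le_left _ ha
    have g2 : (Nat.gcd a b : ℝ) ≤ b := by exact_mod_cast Nat.gcd_le_right _ hb
    rw [show 2 * √(A * B) = √(4 * (A * B)) by
      rw [Real.sqrt_mul (show (0 : ℝ) ≤ 4 by norm_num), show (4 : ℝ) = 2 ^ 2 by norm_num,
        Real.sqrt_sq (by norm_num)]]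
    apply Real.le_sqrt_of_sq_le
    calc (Nat.gcd a b : ℝ) ^ 2 = (Nat.gcd a b : ℝ) * (Nat.gcd a b : ℝ) := by ring
      _ ≤ (2 * A) * (2 * B) := by
        apply mul_le_mul (g1.trans h1) (g2.trans h2) (by positivity) (by positivity)
      _ = _ := by ring
  have hcard : S.card = ∑ p ∈ Finset.Icc 1 E ×ˢ Finset.Icc 1 F,
      (S.filter (fun q => (Nat.gcd q.1.1 q.1.2, Nat.gcd q.2.1 q.2.2) = p)).card := by
    apply Finset.card_eq_sum_card_fiberwise
    intro q hq
    obtain ⟨a1, a2, a3, a4⟩ := hS1 q hq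
    obtain ⟨b1, b2, b3, b4⟩ := hS2 q hq
    simp only [Finset.coe_product, Set.mem_prod]
    exact ⟨gcdb _ _ A B hA hB a1 a2 a3 a4, gcdb _ _ M N hM hN b1 b2 b3 b4⟩
  have hfib : ∀ e ∈ Finset.Icc 1 E, ∀ f ∈ Finset.Icc 1 F,
      ((S.filter (fun q => (Nat.gcd q.1.1 q.1.2, Nat.gcd q.2.1 q.2.2) = (e, f))).card : ℝ) ≤
        4 * min (X / (e : ℝ) ^ 2) (Y / (f : ℝ) ^ 2) +
          16 * η * (X / (e : ℝ) ^ 2) * (Y / (f : ℝ) ^ 2) := by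
    intro e he f hf
    have he0 : 0 < e := (Finset.mem_Icc.1 he).1
    have hf0 : 0 < f := (Finset.mem_Icc.1 hf).1
    set U := S.filter (fun q => (Nat.gcd q.1.1 q.1.2, Nat.gcd q.2.1 q.2.2) = (e, f)) with hU
    have hUm : ∀ q ∈ U, q ∈ S ∧ Nat.gcd q.1.1 q.1.2 = e ∧ Nat.gcd q.2.1 q.2.2 = f := by
      intro q hq
      simpa [hU] using hq
    have b1 : ((U.image Prod.fst).card : ℝ) ≤ 4 * (X / (e : ℝ) ^ 2) := by
      apply sc_box A B (by linarith) (by linarith) e he0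
      intro p hp
      obtain ⟨q, hq, rfl⟩ := Finset.mem_image.1 hp
      obtain ⟨c1, c2, c3⟩ := hUm q hq
      obtain ⟨a1, a2, a3, a4⟩ := hS1 q c1
      exact ⟨a1, a2, a3, a4, c2⟩
    have b2 : ((U.image Prod.snd).card : ℝ) ≤ 4 * (Y / (f : ℝ) ^ 2) := by
      apply sc_box M N (by linarith) (by linarith) f hf0
      intro p hp
      obtain ⟨q, hq, rfl⟩ := Finset.mem_image.1 hp
      obtain ⟨c1, c2, c3⟩ := hUm q hq
      obtain ⟨a1, a2, a3, a4⟩ := hS2 q c1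
      exact ⟨a1, a2, a3, a4, c3⟩
    have d1 : ∀ a ∈ U.image Prod.fst, ((U.filter (fun x => x.1 = a)).card) ≤
        ⌊1 + 4 * η * (Y / (f : ℝ) ^ 2)⌋₊ := by
      intro a ha
      apply Nat.le_floor
      have : (U.filter (fun x => x.1 = a)).card =
          ((U.filter (fun x => x.1 = a)).image Prod.snd).card := by
        rw [Finset.card_image_of_injOn]
        intro x hx y hy hxy
        simp only [Finset.coe_filter, Set.mem_ofPred_eq] at hx hy
        exact Prod.ext (hx.2.trans hy.2.symm) hxy
      rw [this]
      apply sc_spaced M N η (by linarith) (by linarith) hη f hf0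
      · intro p hp
        obtain ⟨q, hq, rfl⟩ := Finset.mem_image.1 hp
        obtain ⟨c1, c2, c3⟩ := hUm q (Finset.mem_filter.1 hq).1
        obtain ⟨a1, a2, a3, a4⟩ := hS2 q c1
        exact ⟨a1, a2, a3, a4, c3⟩
      · intro p hp p' hp'
        obtain ⟨q, hq, rfl⟩ := Finset.mem_image.1 hp
        obtain ⟨q', hq', rfl⟩ := Finset.mem_image.1 hp'
        rw [Finset.mem_filter] at hq hq'
        exact h1 q (hUm q hq.1).1 q' (hUm q' hq'.1).1 (hq.2.trans hq'.2.symm)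
    have d2 : ∀ a ∈ U.image Prod.snd, ((U.filter (fun x => x.2 = a)).card) ≤
        ⌊1 + 4 * η * (X / (e : ℝ) ^ 2)⌋₊ := by
      intro a ha
      apply Nat.le_floor
      have : (U.filter (fun x => x.2 = a)).card =
          ((U.filter (fun x => x.2 = a)).image Prod.fst).card := by
        rw [Finset.card_image_of_injOn]
        intro x hx y hy hxy
        simp only [Finset.coe_filter, Set.mem_ofPred_eq] at hx hy
        exact Prod.ext hxy (hx.2.trans hy.2.symm)
      rw [this]
      apply sc_spaced A B η (by linarith) (by linarith) hη e he0
      · intro p hp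
        obtain ⟨q, hq, rfl⟩ := Finset.mem_image.1 hp
        obtain ⟨c1, c2, c3⟩ := hUm q (Finset.mem_filter.1 hq).1
        obtain ⟨a1, a2, a3, a4⟩ := hS1 q c1
        exact ⟨a1, a2, a3, a4, c2⟩
      · intro p hp p' hp'
        obtain ⟨q, hq, rfl⟩ := Finset.mem_image.1 hp
        obtain ⟨q', hq', rfl⟩ := Finset.mem_image.1 hp'
        rw [Finset.mem_filter] at hq hq'
        exact h2 q (hUm q hq.1).1 q' (hUm q' hq'.1).1 (hq.2.trans hq'.2.symm)
    have f1 : (U.card : ℝ) ≤ (1 + 4 * η * (Y / (f : ℝ) ^ 2)) * (4 * (X / (e : ℝ) ^ 2)) := by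
      have := Finset.card_le_mul_card_image U _ d1
      calc (U.card : ℝ) ≤ (⌊1 + 4 * η * (Y / (f : ℝ) ^ 2)⌋₊ : ℝ) * (U.image Prod.fst).card := by
            exact_mod_cast this
        _ ≤ _ := by
            gcongr
            exact Nat.floor_le (by positivity)
    have f2 : (U.card : ℝ) ≤ (1 + 4 * η * (X / (e : ℝ) ^ 2)) * (4 * (Y / (f : ℝ) ^ 2)) := by
      have := Finset.card_le_mul_card_image U _ d2
      calc (U.card : ℝ) ≤ (⌊1 + 4 * η * (X / (e : ℝ) ^ 2)⌋₊ : ℝ) * (U.image Prod.snd).card := by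
            exact_mod_cast this
        _ ≤ _ := by
            gcongr
            exact Nat.floor_le (by positivity)
    rcases min_choice (X / (e : ℝ) ^ 2) (Y / (f : ℝ) ^ 2) with h | h <;> rw [h]
    · linarith
    · linarith
  rw [hcard, Finset.sum_product]
  push_cast
  have hE : 1 ≤ E := by
    apply Nat.le_floor
    have : 1 ≤ √X := Real.one_le_sqrt.2 hX1
    push_cast; linarith
  calc _ ≤ ∑ e ∈ Finset.Icc 1 E, ∑ f ∈ Finset.Icc 1 F,
        (4 * min (X / (e : ℝ) ^ 2) (Y / (f : ℝ) ^ 2) +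
          16 * η * (X / (e : ℝ) ^ 2) * (Y / (f : ℝ) ^ 2)) := by
        apply Finset.sum_le_sum; intro e he
        apply Finset.sum_le_sum; intro f hf
        exact hfib e he f hf
    _ = ∑ e ∈ Finset.Icc 1 E, (4 * ∑ f ∈ Finset.Icc 1 F, min (X / (e : ℝ) ^ 2) (Y / (f : ℝ) ^ 2)
          + 16 * η * (X / (e : ℝ) ^ 2) * (Y * ∑ f ∈ Finset.Icc 1 F, 1 / (f : ℝ) ^ 2)) := by
        apply Finset.sum_congr rfl; intro e he
        rw [Finset.sum_add_distrib, ← Finset.mul_sum, ← Finset.mul_sum, Finset.mul_sum (a := Y)]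
        simp only [mul_one_div]
    _ ≤ ∑ e ∈ Finset.Icc 1 E, (4 * (4 * (√(X * Y) * (e : ℝ)⁻¹))
          + 16 * η * (X * (1 / (e : ℝ) ^ 2)) * (Y * 4)) := by
        apply Finset.sum_le_sum; intro e he
        have he0 : (0 : ℝ) < e := by exact_mod_cast (Finset.mem_Icc.1 he).1
        have s1 := sc_summin' (X / (e : ℝ) ^ 2) Y (by positivity) hY0 F
        have s2 := sc_invsq F
        have : √(X / (e : ℝ) ^ 2 * Y) = √(X * Y) * (e : ℝ)⁻¹ := by
          rw [show X / (e : ℝ) ^ 2 * Y = X * Y * ((e : ℝ)⁻¹) ^ 2 by field_simp,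
            Real.sqrt_mul (by positivity), Real.sqrt_sq (by positivity)]
        rw [this] at s1
        rw [mul_one_div]
        gcongr
    _ = 16 * √(X * Y) * (∑ e ∈ Finset.Icc 1 E, (e : ℝ)⁻¹) +
          64 * η * (X * Y) * ∑ e ∈ Finset.Icc 1 E, 1 / (e : ℝ) ^ 2 := by
        rw [Finset.sum_add_distrib, Finset.mul_sum, Finset.mul_sum]
        congr 1 <;> (apply Finset.sum_congr rfl; intro e he; ring)
    _ ≤ 16 * √(X * Y) * (1 + Real.log (2 * √X)) + 64 * η * (X * Y) * 4 := by
        have s2 := sc_invsq E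
        have s3 : ∑ e ∈ Finset.Icc 1 E, (e : ℝ)⁻¹ ≤ 1 + Real.log (2 * √X) := by
          have := harmonic_le_one_add_log E
          rw [harmonic_eq_sum_Icc] at this
          push_cast at this
          refine this.trans ?_
          gcongr
          exact Nat.floor_le (by positivity)
        gcongr
    _ = _ := by ring

lemma sc_ratio (k : ℕ) (D₁ D₂ N₁ N₂ S δ d₁ d₂ n₁ n₂ : ℝ) (hD₁ : 1 ≤ D₁) (hD₂ : 1 ≤ D₂)
    (hN₁ : 1 ≤ N₁) (hN₂ : 1 ≤ N₂) (hS : 0 < S) (hS4 : S ^ 4 * (D₁ * D₂) ^ k = N₁ * N₂)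
    (hδS : 12 * 2 ^ k * δ ≤ S) (h1 : D₁ < d₁) (h2 : d₁ ≤ 2 * D₁)
    (h3 : D₂ < d₂) (h4 : d₂ ≤ 2 * D₂) (h5 : N₁ < n₁) (h6 : N₂ < n₂)
    (h : |√(n₁ / d₁ ^ k) - √(n₂ / d₂ ^ k)| ≤ δ) :
    |n₁ / n₂ - (d₁ / d₂) ^ k| ≤ 6 * 2 ^ k * δ / S * (d₁ / d₂) ^ k := by
  have d1 : 0 < d₁ := by linarith
  have d2 : 0 < d₂ := by linarith
  have n1 : 0 < n₁ := by linarith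
  have n2 : 0 < n₂ := by linarith
  have e1 : √(n₁ / d₁ ^ k) ^ 2 = n₁ / d₁ ^ k := Real.sq_sqrt (by positivity)
  have e2 : √(n₂ / d₂ ^ k) ^ 2 = n₂ / d₂ ^ k := Real.sq_sqrt (by positivity)
  have p1 : 0 < √(n₁ / d₁ ^ k) := by positivity
  have p2 : 0 < √(n₂ / d₂ ^ k) := by positivity
  set s := √(n₁ / d₁ ^ k)
  set t := √(n₂ / d₂ ^ k)
  have hK : (1 : ℝ) ≤ 2 ^ k := one_le_pow₀ (by norm_num)
  have hδ : 0 ≤ δ := (abs_nonneg _).trans h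
  have hst : S ^ 2 ≤ 2 ^ k * (s * t) := by
    refine (pow_le_pow_iff_left₀ (by positivity) (by positivity) two_ne_zero).1 ?_
    have : (2 ^ k * (s * t)) ^ 2 = 4 ^ k * (n₁ * n₂) / (d₁ * d₂) ^ k := by
      rw [mul_pow, mul_pow, e1, e2, ← pow_mul, mul_comm k 2, pow_mul, mul_pow]
      norm_num
      field_simp
    rw [this, le_div_iff₀ (by positivity)]
    calc (S ^ 2) ^ 2 * (d₁ * d₂) ^ k ≤ (S ^ 2) ^ 2 * ((2 * D₁) * (2 * D₂)) ^ k := by gcongr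
      _ = 4 ^ k * (S ^ 4 * (D₁ * D₂) ^ k) := by
        rw [show (2 * D₁) * (2 * D₂) = 4 * (D₁ * D₂) by ring, mul_pow]; ring
      _ ≤ 4 ^ k * (n₁ * n₂) := by rw [hS4]; gcongr
  obtain ⟨ha, hb⟩ := abs_le.1 h
  set K : ℝ := 2 ^ k
  have hKδ : K * δ ≤ S / 12 := by linarith
  have ht : S ≤ 2 * K * t := by
    by_contra hn
    push Not at hn
    have c1 : K * s ≤ S := by nlinarith
    have c2 : K * (s * t) ≤ S * t := by nlinarith
    have c3 : S * t < S * S := by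
      apply mul_lt_mul_of_pos_left _ hS
      nlinarith
    nlinarith
  set ε := 2 * K * δ / S with hε
  have hε0 : 0 ≤ ε := by positivity
  have hε1 : ε ≤ 1 := by
    rw [hε, div_le_one hS]; linarith
  have hδt : δ ≤ ε * t := by
    rw [hε, div_mul_eq_mul_div, le_div_iff₀ hS]
    nlinarith
  have hq : |s ^ 2 - t ^ 2| ≤ 3 * ε * t ^ 2 := by
    have : |s ^ 2 - t ^ 2| = |s - t| * (s + t) := by
      rw [show s ^ 2 - t ^ 2 = (s - t) * (s + t) by ring, abs_mul,
        abs_of_pos (show 0 < s + t by positivity)]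
    rw [this]
    calc |s - t| * (s + t) ≤ (ε * t) * (3 * t) := by
          gcongr
          · linarith
          · nlinarith
      _ = _ := by ring
  have f1 : n₁ / n₂ - (d₁ / d₂) ^ k = (s ^ 2 - t ^ 2) * (d₁ ^ k / n₂) := by
    rw [e1, e2, div_pow]
    field_simp
  have f2 : (d₁ / d₂) ^ k = t ^ 2 * (d₁ ^ k / n₂) := by
    rw [e2, div_pow]
    field_simp
  have f3 : 6 * K * δ / S = 3 * ε := by rw [hε]; ring
  rw [f1, f2, f3, abs_mul, abs_of_pos (show 0 < d₁ ^ k / n₂ by positivity), ← mul_assoc]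
  gcongr

lemma sc_pow (k : ℕ) (hk : 1 ≤ k) (x y ζ ν : ℝ) (hx : 0 < x) (hy : 0 < y) (hζ : 0 ≤ ζ)
    (h1 : |ν - x ^ k| ≤ ζ * x ^ k) (h2 : |ν - y ^ k| ≤ ζ * y ^ k) :
    |x - y| ≤ 2 * ζ * max x y := by
  wlog hxy : y ≤ x generalizing x y
  · rw [abs_sub_comm, max_comm]
    exact this y x hy hx h2 h1 (by linarith)
  obtain ⟨j, rfl⟩ : ∃ j, k = j + 1 := ⟨k - 1, by omega⟩
  rw [max_eq_left hxy, abs_of_nonneg (by linarith)]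
  have hyx : y ^ (j + 1) ≤ x ^ (j + 1) := by gcongr
  have a1 := (abs_le.1 h1).1
  have a2 := (abs_le.1 h2).2
  have a3 : ζ * y ^ (j + 1) ≤ ζ * x ^ (j + 1) := by gcongr
  have hj : y ^ j ≤ x ^ j := by gcongr
  have b1 : (x - y) * x ^ j ≤ x ^ (j + 1) - y ^ (j + 1) := by
    rw [pow_succ, pow_succ]; nlinarith
  have b2 : (x - y) * x ^ j ≤ (2 * ζ * x) * x ^ j := by
    calc _ ≤ 2 * ζ * x ^ (j + 1) := by linarith
      _ = _ := by ring
  exact le_of_mul_le_mul_right b2 (by positivity)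

/-- Lemma 5.1: the number of quadruples `(d₁,d₂,n₁,n₂)` with `Dᵢ < dᵢ ≤ 2Dᵢ`, `Nᵢ < nᵢ ≤ 2Nᵢ`
and `|√(n₁/d₁^k) - √(n₂/d₂^k)| ≤ δ` is
`≪ δ (D₁D₂)^{1+k/4} (N₁N₂)^{3/4} + (D₁D₂N₁N₂)^{1/2} log(2D₁D₂N₁N₂)`. -/
theorem spacing_count (k : ℕ) (hk : 2 ≤ k) :
    ∃ C : ℝ, ∀ D₁ D₂ N₁ N₂ : ℝ, 1 ≤ D₁ → 1 ≤ D₂ → 1 ≤ N₁ → 1 ≤ N₂ →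
      ∀ δ : ℝ, 0 < δ →
      (Set.ncard {q : ℕ × ℕ × ℕ × ℕ |
          0 < q.1 ∧ 0 < q.2.1 ∧ 0 < q.2.2.1 ∧ 0 < q.2.2.2 ∧
          D₁ < (q.1 : ℝ) ∧ (q.1 : ℝ) ≤ 2 * D₁ ∧
          D₂ < (q.2.1 : ℝ) ∧ (q.2.1 : ℝ) ≤ 2 * D₂ ∧
          N₁ < (q.2.2.1 : ℝ) ∧ (q.2.2.1 : ℝ) ≤ 2 * N₁ ∧
          N₂ < (q.2.2.2 : ℝ) ∧ (q.2.2.2 : ℝ) ≤ 2 * N₂ ∧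
          |Real.sqrt ((q.2.2.1 : ℝ) / (q.1 : ℝ) ^ k) -
            Real.sqrt ((q.2.2.2 : ℝ) / (q.2.1 : ℝ) ^ k)| ≤ δ} : ℝ)
        ≤ C * (δ * (D₁ * D₂) ^ (1 + (k : ℝ) / 4) * (N₁ * N₂) ^ ((3 : ℝ) / 4) +
            (D₁ * D₂ * N₁ * N₂) ^ ((1 : ℝ) / 2) * Real.log (2 * D₁ * D₂ * N₁ * N₂)) := by
  classical
  refine ⟨12288 * 2 ^ k + 48, ?_⟩
  intro D₁ D₂ N₁ N₂ hD₁ hD₂ hN₁ hN₂ δ hδ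
  set V := {q : ℕ × ℕ × ℕ × ℕ |
          0 < q.1 ∧ 0 < q.2.1 ∧ 0 < q.2.2.1 ∧ 0 < q.2.2.2 ∧
          D₁ < (q.1 : ℝ) ∧ (q.1 : ℝ) ≤ 2 * D₁ ∧
          D₂ < (q.2.1 : ℝ) ∧ (q.2.1 : ℝ) ≤ 2 * D₂ ∧
          N₁ < (q.2.2.1 : ℝ) ∧ (q.2.2.1 : ℝ) ≤ 2 * N₁ ∧
          N₂ < (q.2.2.2 : ℝ) ∧ (q.2.2.2 : ℝ) ≤ 2 * N₂ ∧
          |Real.sqrt ((q.2.2.1 : ℝ) / (q.1 : ℝ) ^ k) -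
            Real.sqrt ((q.2.2.2 : ℝ) / (q.2.1 : ℝ) ^ k)| ≤ δ} with hV
  have hsub : V ⊆ ↑(Finset.Icc 1 ⌊2 * D₁⌋₊ ×ˢ Finset.Icc 1 ⌊2 * D₂⌋₊ ×ˢ
      Finset.Icc 1 ⌊2 * N₁⌋₊ ×ˢ Finset.Icc 1 ⌊2 * N₂⌋₊) := by
    rintro ⟨a, b, c, d⟩ ⟨a1, a2, a3, a4, -, b1, -, b2, -, b3, -, b4, -⟩
    simp only [Finset.coe_product, Finset.coe_Icc, Set.mem_prod, Set.mem_Icc]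
    exact ⟨⟨a1, Nat.le_floor b1⟩, ⟨a2, Nat.le_floor b2⟩, ⟨a3, Nat.le_floor b3⟩,
      ⟨a4, Nat.le_floor b4⟩⟩
  have hfin : V.Finite := (Finset.finite_toSet _).subset hsub
  set P := D₁ * D₂ with hP
  set Q := N₁ * N₂ with hQ
  have hP1 : 1 ≤ P := one_le_mul_of_one_le_of_one_le hD₁ hD₂
  have hQ1 : 1 ≤ Q := one_le_mul_of_one_le_of_one_le hN₁ hN₂
  have hP0 : 0 < P := by linarith
  have hQ0 : 0 < Q := by linarith
  have hK : (1 : ℝ) ≤ 2 ^ k := one_le_pow₀ (by norm_num)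
  set S : ℝ := Q ^ ((1 : ℝ) / 4) / P ^ ((k : ℝ) / 4) with hSdef
  have hS : 0 < S := by positivity
  have hS4 : S ^ 4 * P ^ k = Q := by
    rw [hSdef, div_pow, ← Real.rpow_natCast, ← Real.rpow_natCast, ← Real.rpow_mul hQ0.le,
      ← Real.rpow_mul hP0.le, ← Real.rpow_natCast P k]
    norm_num
    field_simp
  have hmain : δ * P ^ (1 + (k : ℝ) / 4) * Q ^ ((3 : ℝ) / 4) = δ / S * (Q * P) := by
    have e1 : P ^ (1 + (k : ℝ) / 4) = P * P ^ ((k : ℝ) / 4) := by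
      rw [Real.rpow_add hP0, Real.rpow_one]
    have e2 : Q ^ ((1 : ℝ) / 4) * Q ^ ((3 : ℝ) / 4) = Q := by
      rw [← Real.rpow_add hQ0]; norm_num
    rw [e1, hSdef]
    have : 0 < Q ^ ((1 : ℝ) / 4) := by positivity
    have : 0 < P ^ ((k : ℝ) / 4) := by positivity
    rw [div_div_eq_mul_div, div_mul_eq_mul_div, eq_div_iff (by positivity)]
    calc _ = δ * (P * P ^ ((k : ℝ) / 4)) * (Q ^ ((1 : ℝ) / 4) * Q ^ ((3 : ℝ) / 4)) := by ring
      _ = _ := by rw [e2]; ring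
  have hprod : P * N₁ * N₂ = Q * P := by rw [hQ]; ring
  have hprod' : 2 * D₁ * D₂ * N₁ * N₂ = 2 * (Q * P) := by rw [hP, hQ]; ring
  rw [hmain, hprod, hprod', ← Real.sqrt_eq_rpow]
  have hQP1 : 1 ≤ Q * P := one_le_mul_of_one_le_of_one_le hQ1 hP1
  have hL : 1 / 2 ≤ Real.log (2 * (Q * P)) := by
    have h1 : Real.log 2 ≤ Real.log (2 * (Q * P)) := by
      apply Real.log_le_log (by norm_num); linarith
    have := Real.log_two_gt_d9
    linarith
  set L := Real.log (2 * (Q * P)) with hLdef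
  have hsq : 0 ≤ √(Q * P) := Real.sqrt_nonneg _
  have hδS : 0 < δ / S := by positivity
  by_cases hcase : 12 * 2 ^ k * δ ≤ S
  · -- main case
    set φ : ℕ × ℕ × ℕ × ℕ → (ℕ × ℕ) × (ℕ × ℕ) := fun q => ((q.2.2.1, q.2.2.2), (q.1, q.2.1))
      with hφ
    have hφi : Function.Injective φ := by
      rintro ⟨a, b, c, d⟩ ⟨a', b', c', d'⟩ h
      simp only [hφ, Prod.mk.injEq] at h ⊢
      tauto
    set ζ := 6 * 2 ^ k * δ / S with hζ
    have hζ0 : 0 ≤ ζ := by positivity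
    have hζ1 : ζ ≤ 1 / 2 := by
      rw [hζ, div_le_iff₀ hS]; linarith
    have hmem : ∀ q ∈ hfin.toFinset.image φ,
        (0 < q.1.1 ∧ 0 < q.1.2 ∧ (q.1.1 : ℝ) ≤ 2 * N₁ ∧ (q.1.2 : ℝ) ≤ 2 * N₂) ∧
        (0 < q.2.1 ∧ 0 < q.2.2 ∧ (q.2.1 : ℝ) ≤ 2 * D₁ ∧ (q.2.2 : ℝ) ≤ 2 * D₂) ∧
        (N₂ < q.1.2 ∧ D₂ < q.2.2) ∧
        |(q.1.1 : ℝ) / q.1.2 - ((q.2.1 : ℝ) / q.2.2) ^ k| ≤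
          ζ * ((q.2.1 : ℝ) / q.2.2) ^ k := by
      intro q hq
      obtain ⟨⟨d₁, d₂, n₁, n₂⟩, hr, rfl⟩ := Finset.mem_image.1 hq
      rw [Set.Finite.mem_toFinset] at hr
      obtain ⟨a1, a2, a3, a4, c1, b1, c2, b2, c3, b3, c4, b4, hh⟩ := hr
      exact ⟨⟨a3, a4, b3, b4⟩, ⟨a1, a2, b1, b2⟩, ⟨c4, c2⟩,
        sc_ratio k D₁ D₂ N₁ N₂ S δ d₁ d₂ n₁ n₂ hD₁ hD₂ hN₁ hN₂ hS hS4 hcase c1 b1 c2 b2 c3 c4 hh⟩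
    have hdr : ∀ a b : ℕ, ∀ A B : ℝ, 1 ≤ A → 1 ≤ B → (a : ℝ) ≤ 2 * A → B < b →
        (a : ℝ) / b ≤ 2 * (A / B) := by
      intro a b A B hA hB ha hb
      rw [← mul_div_assoc]
      gcongr
    have core := sc_core N₁ N₂ D₁ D₂ (8 * ζ) hN₁ hN₂ hD₁ hD₂ (by positivity)
      (hfin.toFinset.image φ) (fun q hq => (hmem q hq).1) (fun q hq => (hmem q hq).2.1) ?_ ?_
    · rw [Finset.card_image_of_injective _ hφi, ← Set.ncard_eq_toFinset_card V hfin] at core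
      refine core.trans ?_
      rw [← hP, ← hQ]
      have g1 : Real.log (2 * √Q) ≤ L := by
        apply Real.log_le_log (by positivity)
        have : √Q ≤ Q := by
          rw [Real.sqrt_le_left hQ0.le]; nlinarith
        nlinarith
      have g2 : √(Q * P) * (1 + Real.log (2 * √Q)) ≤ √(Q * P) * (3 * L) := by
        gcongr; linarith
      have g3 : 256 * (8 * ζ) * (Q * P) = 12288 * 2 ^ k * (δ / S * (Q * P)) := by
        rw [hζ]; ring
      rw [g3]
      have g4 : 0 ≤ δ / S * (Q * P) := by positivity
      have g5 : 0 ≤ 2 ^ k * (√(Q * P) * L) := by positivity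
      linarith
    · intro q hq r hr hqr
      obtain ⟨⟨a1, a2, a3, a4⟩, ⟨a5, a6, a7, a8⟩, ⟨a9, a10⟩, ha⟩ := hmem q hq
      obtain ⟨⟨b1, b2, b3, b4⟩, ⟨b5, b6, b7, b8⟩, ⟨b9, b10⟩, hb⟩ := hmem r hr
      rw [← hqr] at hb
      have u1 : (0 : ℝ) < q.2.1 := by exact_mod_cast a5
      have u2 : (0 : ℝ) < q.2.2 := by exact_mod_cast a6
      have u3 : (0 : ℝ) < r.2.1 := by exact_mod_cast b5
      have u4 : (0 : ℝ) < r.2.2 := by exact_mod_cast b6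
      refine (sc_pow k (by omega) _ _ ζ _ (by positivity) (by positivity) hζ0 ha hb).trans ?_
      calc 2 * ζ * max ((q.2.1 : ℝ) / q.2.2) ((r.2.1 : ℝ) / r.2.2)
          ≤ 2 * ζ * (2 * (D₁ / D₂)) := by
            gcongr
            exact max_le (hdr _ _ _ _ hD₁ hD₂ a7 a10) (hdr _ _ _ _ hD₁ hD₂ b7 b10)
        _ ≤ _ := by
            have : 0 ≤ ζ * (D₁ / D₂) := by positivity
            linarith
    · intro q hq r hr hqr
      obtain ⟨⟨a1, a2, a3, a4⟩, ⟨a5, a6, a7, a8⟩, ⟨a9, a10⟩, ha⟩ := hmem q hq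
      obtain ⟨⟨b1, b2, b3, b4⟩, ⟨b5, b6, b7, b8⟩, ⟨b9, b10⟩, hb⟩ := hmem r hr
      rw [← hqr] at hb
      have hx := hdr _ _ _ _ hN₁ hN₂ a3 a9
      have hρ : 0 ≤ ((q.2.1 : ℝ) / q.2.2) ^ k := by positivity
      generalize ((q.2.1 : ℝ) / q.2.2) ^ k = ρ at *
      obtain ⟨t1, t2⟩ := abs_le.1 ha
      obtain ⟨t3, t4⟩ := abs_le.1 hb
      have t5 : ζ * ρ ≤ 1 / 2 * ρ := by gcongr
      have t6 : ρ ≤ 4 * (N₁ / N₂) := by linarith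
      have t7 : ζ * ρ ≤ ζ * (4 * (N₁ / N₂)) := by gcongr
      rw [abs_le]; constructor <;> linarith
  · -- trivial case
    push Not at hcase
    have h1 : (V.ncard : ℝ) ≤ 16 * (Q * P) := by
      have := Set.ncard_le_ncard hsub (Finset.finite_toSet _)
      rw [Set.ncard_coe_finset] at this
      simp only [Finset.card_product, Nat.card_Icc, Nat.add_sub_cancel] at this
      calc (V.ncard : ℝ) ≤ (⌊2 * D₁⌋₊ : ℝ) * (⌊2 * D₂⌋₊ * (⌊2 * N₁⌋₊ * ⌊2 * N₂⌋₊)) := by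
            exact_mod_cast this
        _ ≤ (2 * D₁) * ((2 * D₂) * ((2 * N₁) * (2 * N₂))) := by
            gcongr <;> exact Nat.floor_le (by positivity)
        _ = _ := by rw [hP, hQ]; ring
    have h2 : 1 ≤ 12 * 2 ^ k * (δ / S) := by
      rw [← mul_div_assoc, le_div_iff₀ hS]; linarith
    have h3 : Q * P ≤ 12 * 2 ^ k * (δ / S * (Q * P)) := by
      have : 1 * (Q * P) ≤ 12 * 2 ^ k * (δ / S) * (Q * P) := by gcongr
      linarith
    have g4 : 0 ≤ δ / S * (Q * P) := by positivity
    have g5 : 0 ≤ 2 ^ k * (√(Q * P) * L) := by positivity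
    have g6 : 0 ≤ √(Q * P) * L := by positivity
    have g7 : 0 ≤ 2 ^ k * (δ / S * (Q * P)) := by positivity
    linarith
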